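/- Let m ≥ 4 and n ≥ 4m − 4 be integers, let T be a tree on n vertices, and let G be a graph on 2n − 1 vertices that does not contain the fan F_m as a subgraph and whose complement does not contain T as a subgraph. Then the maximum degree of G satisfies Δ(G) ≤ n + m − 2. -/

import Mathlib

/-- `Contains G H` means `G` contains a subgraph isomorphic to `H`, i.e. there is an
injective map on vertices preserving adjacency. -/
def Contains {α β : Type*} (G : SimpleGraph α) (H : SimpleGraph β) : Prop :=
  ∃ f : β → α, Function.Injective f ∧ ∀ ⦃u v⦄, H.Adj u v → G.Adj (f u) (f v)

/-- The fan `F_m = K_1 + mK_2`: a center vertex joined to `m` disjoint edges,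
so `m` triangles sharing exactly one common vertex; it has `2m + 1` vertices. -/
def fan (m : ℕ) : SimpleGraph (Unit ⊕ Fin m × Bool) :=
  SimpleGraph.fromRel (fun x y =>
    (∃ u, x = Sum.inl u) ∨ ∃ i : Fin m, x = Sum.inr (i, true) ∧ y = Sum.inr (i, false))

/-!
The neighbourhood `N` of a vertex of an `F_m`-free graph has no matching with `m` edges. Take a
maximum matching in `N` and let `R` be its set of unmatched vertices, which is independent. A path
`r - a - b - s` with `ab` in the matching and `r ≠ s` in `R` would be augmenting, so one of the two
ends of each matching edge has at most one neighbour in `R`. Delete from `N` the other end of each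
edge to get `X`, and delete from `R` these exceptional neighbours to get `I ⊆ X`: no edge joins `I`
to `X`, so in the complement a vertex cover of the tree (its smaller colour class) can be placed in
`I` and the remaining vertices in `X`. If `|N| ≥ n + m - 1`, there is room for this because
`|X| ≥ |N| - (m - 1) ≥ n` and `|I| ≥ |N| - 3(m - 1) ≥ n - 2m + 2 ≥ n / 2`.
-/

open SimpleGraph
open scoped Finset

section DisjointEdges

variable {ι κ U : Type*} {H : SimpleGraph U}

/-- The graph `ι • K_2`, a disjoint union of edges indexed by `ι`. A copy of it in `H` is a matching
of `H`, with the endpoints of each edge labelled by `Bool`. -/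
def disjointEdges (ι : Type*) : SimpleGraph (ι × Bool) where
  Adj p q := p.1 = q.1 ∧ p.2 ≠ q.2

lemma disjointEdges_isContained_of_embedding (e : κ ↪ ι) : disjointEdges κ ⊑ disjointEdges ι :=
  ⟨⟨⟨fun p => (e p.1, p.2), fun h => ⟨congrArg e h.1, h.2⟩⟩,
    e.injective.prodMap Function.injective_id⟩⟩

lemma exists_disjointEdges_isContained_and_not_option {m : ℕ}
    (h : ¬ disjointEdges (Fin m) ⊑ H) :
    ∃ k < m, disjointEdges (Fin k) ⊑ H ∧ ¬ disjointEdges (Option (Fin k)) ⊑ H := by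
  induction m with
  | zero => exact absurd .of_isEmpty h
  | succ m ih =>
    by_cases hm : disjointEdges (Fin m) ⊑ H
    · exact ⟨m, m.lt_succ_self, hm, fun h' => h <|
        (disjointEdges_isContained_of_embedding (finSuccEquiv m).toEmbedding).trans h'⟩
    · obtain ⟨k, hk, hmax⟩ := ih hm
      exact ⟨k, hk.trans m.lt_succ_self, hmax⟩

lemma disjointEdges_option_isContained_of_adj (f : Copy (disjointEdges ι) H) {r s : U}
    (hr : r ∉ Set.range f) (hs : s ∉ Set.range f) (h : H.Adj r s) :
    disjointEdges (Option ι) ⊑ H := by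
  have hf : Function.Injective f := f.injective
  have hrs : r ≠ s := h.ne
  refine ⟨⟨⟨fun p => p.1.elim (bif p.2 then r else s) fun i => f (i, p.2), ?_⟩, ?_⟩⟩
  · rintro ⟨_ | i, b⟩ ⟨_ | j, c⟩ ⟨hij, hbc⟩
    · cases b <;> cases c <;> simp_all [h.symm]
    · cases hij
    · cases hij
    · exact f.toHom.map_adj ⟨Option.some.inj hij, hbc⟩
  · rintro ⟨_ | i, _ | _⟩ ⟨_ | j, _ | _⟩ hpq <;> simp_all [hf.eq_iff]

lemma exists_copy_disjointEdges_eq_update [DecidableEq ι] (f : Copy (disjointEdges ι) H)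
    {p : ι × Bool} {r : U} (hr : r ∉ Set.range f) (h : H.Adj (f (p.1, !p.2)) r) :
    ∃ g : Copy (disjointEdges ι) H, ⇑g = Function.update f p r := by
  refine ⟨⟨⟨Function.update f p r, ?_⟩, ?_⟩, rfl⟩
  · rintro ⟨i, b⟩ ⟨j, c⟩ ⟨rfl : i = j, hbc : b ≠ c⟩
    have hadj : H.Adj (f (i, b)) (f (i, c)) := f.toHom.map_adj ⟨rfl, hbc⟩
    change H.Adj (Function.update f p r (i, b)) (Function.update f p r (i, c))
    obtain rfl | hb := eq_or_ne p (i, b)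
    · rw [Function.update_self, Function.update_of_ne (by simpa using hbc.symm)]
      exact (Bool.eq_not_of_ne hbc.symm ▸ h).symm
    obtain rfl | hc := eq_or_ne p (i, c)
    · rw [Function.update_self, Function.update_of_ne hb.symm]
      exact Bool.eq_not_of_ne hbc ▸ h
    · rwa [Function.update_of_ne hb.symm, Function.update_of_ne hc.symm]
  · intro q q' hq
    have hq : Function.update f p r q = Function.update f p r q' := hq
    have hf : Function.Injective f := f.injective
    grind [Function.update_apply]

lemma unmatched_eq_of_adj_of_adj_not (f : Copy (disjointEdges ι) H)
    (hmax : ¬ disjointEdges (Option ι) ⊑ H) {i : ι} {b : Bool} {r s : U}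
    (hr : r ∉ Set.range f) (hs : s ∉ Set.range f)
    (hir : H.Adj (f (i, b)) r) (his : H.Adj (f (i, !b)) s) : r = s := by
  classical
  by_contra hrs
  obtain ⟨g, hg⟩ := exists_copy_disjointEdges_eq_update f (p := (i, !b)) hr (by simpa using hir)
  have hgr (q) : g q = r ∨ q ≠ (i, !b) ∧ g q = f q := by
    by_cases hq : q = (i, !b) <;> simp [hg, hq]
  refine hmax (disjointEdges_option_isContained_of_adj g ?_ ?_ his)
  · rintro ⟨q, hq⟩
    rcases hgr q with h | ⟨hne, h⟩
    · exact hr ⟨_, hq.symm.trans h⟩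
    · exact hne (f.injective (h.symm.trans hq))
  · rintro ⟨q, hq⟩
    rcases hgr q with h | ⟨-, h⟩
    · exact hrs (h.symm.trans hq)
    · exact hs ⟨q, h.symm.trans hq⟩

lemma exists_endpoint_forall_unmatched_adj_eq (f : Copy (disjointEdges ι) H)
    (hmax : ¬ disjointEdges (Option ι) ⊑ H) (i : ι) :
    ∃ b z, ∀ r ∉ Set.range f, H.Adj (f (i, b)) r → r = z := by
  by_contra! h
  obtain ⟨s, hs, hs_adj, -⟩ := h false (f (i, false))
  obtain ⟨r, hr, hr_adj, hrs⟩ := h true s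
  exact hrs (unmatched_eq_of_adj_of_adj_not f hmax hr hs hr_adj hs_adj)

lemma exists_subset_forall_not_adj [Fintype ι] [Fintype U] (f : Copy (disjointEdges ι) H)
    (hmax : ¬ disjointEdges (Option ι) ⊑ H) :
    ∃ I X : Finset U, I ⊆ X ∧ Fintype.card U ≤ #I + 3 * Fintype.card ι ∧
      Fintype.card U ≤ #X + Fintype.card ι ∧ ∀ x ∈ I, ∀ y ∈ X, ¬ H.Adj x y := by
  classical
  choose b z hz using exists_endpoint_forall_unmatched_adj_eq f hmax
  set M : Finset U := Finset.univ.image f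
  set D : Finset U := Finset.univ.image fun i => f (i, !b i)
  set Z : Finset U := Finset.univ.image z
  have hM : #M ≤ 2 * Fintype.card ι := Finset.card_image_le.trans (by simp [mul_comm])
  have hD : #D ≤ Fintype.card ι := Finset.card_image_le
  have hZ : #Z ≤ Fintype.card ι := Finset.card_image_le
  refine ⟨(M ∪ Z)ᶜ, Dᶜ, ?_, ?_, ?_, fun x hx y hy hxy => ?_⟩
  · have hDM : D ⊆ M :=
      Finset.image_subset_iff.2 fun i _ => Finset.mem_image_of_mem f (Finset.mem_univ _)
    exact Finset.compl_subset_compl.2 (hDM.trans Finset.subset_union_left)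
  · have := Finset.card_union_le M Z
    rw [Finset.card_compl]
    omega
  · rw [Finset.card_compl]
    omega
  · have hxM : x ∉ Set.range f := fun ⟨p, hp⟩ => by simp [M, ← hp] at hx
    have hxZ : ∀ i, x ≠ z i := fun i hi => by simp [Z, hi] at hx
    have hyD : ∀ i, y ≠ f (i, !b i) := fun i hi => by simp [D, hi] at hy
    by_cases hyM : y ∈ Set.range f
    · obtain ⟨⟨i, c⟩, rfl⟩ := hyM
      have hc : c = b i := by_contra fun hc => hyD i (by rw [Bool.eq_not_of_ne hc])
      exact hxZ i (hz i x hxM (hc ▸ hxy.symm))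
    · exact hmax (disjointEdges_option_isContained_of_adj f hxM hyM hxy)

end DisjointEdges

section VertexCover

variable {U V : Type*} [Fintype V] {H : SimpleGraph U} {T : SimpleGraph V}

lemma exists_isVertexCover_two_mul_card_le (hT : T.IsBipartite) :
    ∃ C : Finset V, T.IsVertexCover C ∧ 2 * #C ≤ Fintype.card V := by
  classical
  obtain ⟨c⟩ := hT
  obtain ⟨k, hk⟩ := Fintype.exists_card_fiber_lt_of_card_lt_mul c
    (n := Fintype.card V / 2 + 1) (by rw [Fintype.card_fin]; omega)
  refine ⟨({v | c v = k} : Finset V), fun u v huv => ?_, by omega⟩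
  have := c.valid huv
  simp only [Finset.coe_filter, Finset.mem_univ, true_and, Set.mem_ofPred_eq]
  omega

lemma isContained_of_isVertexCover {C : Finset V} (hC : T.IsVertexCover C) {I X : Finset U}
    (hIX : I ⊆ X) (hCI : #C ≤ #I) (hVX : Fintype.card V ≤ #X)
    (hadj : ∀ x ∈ I, ∀ y ∈ X, x ≠ y → H.Adj x y) : T ⊑ H := by
  classical
  rcases isEmpty_or_nonempty U with hU | hU
  · have : IsEmpty V := by simpa [X.eq_empty_of_isEmpty, Fintype.card_eq_zero_iff] using hVX
    exact .of_isEmpty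
  obtain ⟨f, hfI, hf⟩ := C.finite_toSet.exists_injOn_of_encard_le (t := (I : Set U)) (by simpa)
  have himage : C.image f ⊆ I := Finset.image_subset_iff.2 hfI
  obtain ⟨Y, hfY, hYX, hY⟩ := Finset.exists_subsuperset_card_eq (himage.trans hIX)
    (Finset.card_image_le.trans C.card_le_univ) hVX
  obtain ⟨g, hg⟩ := Finset.exists_equiv_extend_of_card_eq hY.symm hfY hf
  have hgI {u : V} (hu : u ∈ C) : (g u : U) ∈ I := hg u hu ▸ hfI hu
  refine ⟨⟨⟨fun u => (g u : U), fun {u v} huv => ?_⟩, Subtype.val_injective.comp g.injective⟩⟩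
  have hne : (g u : U) ≠ g v := Subtype.val_injective.ne (g.injective.ne huv.ne)
  rcases hC huv with hu | hv
  · exact hadj _ (hgI hu) _ (hYX (g v).2) hne
  · exact (hadj _ (hgI hv) _ (hYX (g u).2) hne.symm).symm

theorem disjointEdges_isContained_or_isContained_compl [Fintype U] {m : ℕ} {C : Finset V}
    (hC : T.IsVertexCover C) (hCU : #C + 3 * m ≤ Fintype.card U + 3)
    (hVU : Fintype.card V + m ≤ Fintype.card U + 1) :
    disjointEdges (Fin m) ⊑ H ∨ T ⊑ Hᶜ := by
  refine or_iff_not_imp_left.2 fun hm => ?_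
  obtain ⟨k, hk, ⟨f⟩, hmax⟩ := exists_disjointEdges_isContained_and_not_option hm
  obtain ⟨I, X, hIX, hI, hX, hnadj⟩ := exists_subset_forall_not_adj f hmax
  rw [Fintype.card_fin] at hI hX
  exact isContained_of_isVertexCover hC hIX (by omega) (by omega)
    fun x hx y hy hxy => (compl_adj H x y).2 ⟨hxy, hnadj x hx y hy⟩

end VertexCover

lemma contains_iff_isContained {α β : Type*} {G : SimpleGraph α} {H : SimpleGraph β} :
    Contains G H ↔ H ⊑ G :=
  ⟨fun ⟨f, hf, hadj⟩ => ⟨⟨⟨f, fun h => hadj h⟩, hf⟩⟩,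
    fun ⟨f⟩ => ⟨f, f.injective, fun _ _ h => f.toHom.map_adj h⟩⟩

lemma fan_isContained_of_disjointEdges_isContained_neighborSet {W : Type*} {G : SimpleGraph W}
    {v : W} {m : ℕ} (h : disjointEdges (Fin m) ⊑ G.induce (G.neighborSet v)) : fan m ⊑ G := by
  obtain ⟨f⟩ := h
  refine ⟨⟨⟨Sum.elim (fun _ => v) fun p => (f p : W), ?_⟩, ?_⟩⟩
  · rintro (x | p) (y | q) h
    · exact absurd rfl h.1
    · exact (f q).2
    · exact (f p).2.symm
    · refine f.toHom.map_adj ?_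
      obtain ⟨-, (⟨_, ⟨⟩⟩ | ⟨i, ⟨⟩, ⟨⟩⟩) | (⟨_, ⟨⟩⟩ | ⟨i, ⟨⟩, ⟨⟩⟩)⟩ := h <;> simp [disjointEdges]
  · exact Function.Injective.sumElim (fun _ _ _ => rfl)
      (Subtype.val_injective.comp f.injective) fun _ p => (f p).2.ne

theorem maxDegree_le_of_no_fan_no_tree_general {V W : Type*} [Fintype V] {m : ℕ}
    {T : SimpleGraph V} {C : Finset V} (hC : T.IsVertexCover C)
    (hCm : #C + 2 * m ≤ Fintype.card V + 2) {G : SimpleGraph W}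
    (hnoF : ¬ Contains G (fan m)) (hnoT : ¬ Contains Gᶜ T)
    (v : W) [Fintype (G.neighborSet v)] : G.degree v + 2 ≤ Fintype.card V + m := by
  rw [contains_iff_isContained] at hnoF hnoT
  by_contra! hdeg
  rw [← card_neighborSet_eq_degree] at hdeg
  rcases disjointEdges_isContained_or_isContained_compl (H := G.induce (G.neighborSet v)) hC
    (m := m) (by omega) (by omega) with hM | hT
  · exact hnoF (fan_isContained_of_disjointEdges_isContained_neighborSet hM)
  · exact hnoT (hT.trans (Embedding.complEquiv (Embedding.induce _)).isContained)

/-- If `m ≥ 4`, `n ≥ 4m - 4`, `T` is a tree on `n` vertices and `G` is a graph on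
`2n - 1` vertices containing no `F_m` whose complement contains no `T`, then
`Δ(G) ≤ n + m - 2`. -/
theorem maxDegree_le_of_no_fan_no_tree {V W : Type*} [Fintype V] [Fintype W]
    (m n : ℕ) (hm : 4 ≤ m) (hn : 4 * m - 4 ≤ n)
    (T : SimpleGraph V) (hT : T.IsTree) (hTcard : Fintype.card V = n)
    (G : SimpleGraph W) [DecidableRel G.Adj] (hGcard : Fintype.card W = 2 * n - 1)
    (hnoF : ¬ Contains G (fan m)) (hnoT : ¬ Contains Gᶜ T) :
    G.maxDegree ≤ n + m - 2 := by
  obtain ⟨C, hC, hCcard⟩ := exists_isVertexCover_two_mul_card_le hT.isBipartite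
  refine maxDegree_le_of_forall_degree_le _ _ fun v => ?_
  have := maxDegree_le_of_no_fan_no_tree_general hC (by omega) hnoF hnoT v
  omega
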